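/- For every integer k ≥ 0, the class B_k-VPG is a proper subclass of the class B_{k+1}-VPG; that is, every graph with a B_k-VPG representation has a B_{k+1}-VPG representation, and there exists a graph that has a B_{k+1}-VPG representation but no B_k-VPG representation. -/

import Mathlib

/-!
The two classes are separated by counting neighbourhoods. A curve with `k + 1` axis-parallel
segments is given by `k + 3` real coordinates: two for its first vertex and one more for each
segment. Which members of a fixed family of `m` such curves it meets depends only on how these
coordinates compare with the `O(m)` coordinates of the family, so at most `O(m ^ (k + 3))`
different neighbourhoods occur (`card_le_of_separated`, with constants depending on `k` only).

One more segment gives one more coordinate. For each `c : Fin (k + 4) → Fin L` consider the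
monotone staircase with `k + 2` segments whose `i`-th coordinate is `i * L + c i` (the horizontal
and vertical coordinates alternate). Its `j`-th coordinate can be read off from which of `L`
straight detector segments it meets (`detector_meets_staircase`), since distinct coordinates
live in disjoint blocks of length `L`. So `(k + 4) * L` detectors separate `L ^ (k + 4)`
staircases, and for large `L` (`exists_large`) the intersection graph of all detectors and
staircases has no representation with one bend less.

The inclusion of the classes holds because a degenerate segment may be appended to a curve.
-/

open Set Metric

/-- A point of the plane. -/
abbrev Pt : Type := ℝ × ℝ

/-- The trace (image) of a curve parametrized over `[0,1]`. -/
def Im (γ : ℝ → Pt) : Set Pt := γ '' Icc 0 1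

/-- `γ` is affine on the interval `[s,t]`. -/
def AffOn (γ : ℝ → Pt) (s t : ℝ) : Prop :=
  ∃ a d : Pt, ∀ x ∈ Icc s t, γ x = (a.1 + x * d.1, a.2 + x * d.2)

/-- `γ` is affine on `[s,t]` with a horizontal or vertical direction. -/
def AxisAffOn (γ : ℝ → Pt) (s t : ℝ) : Prop :=
  ∃ a d : Pt, (d.1 = 0 ∨ d.2 = 0) ∧ ∀ x ∈ Icc s t, γ x = (a.1 + x * d.1, a.2 + x * d.2)

/-- `γ` restricted to `[0,1]` is a simple piecewise linear curve consisting of at most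
`n` straight segments. -/
def IsPLCurveN (n : ℕ) (γ : ℝ → Pt) : Prop :=
  InjOn γ (Icc 0 1) ∧
    ∃ t : Fin (n + 1) → ℝ, t 0 = 0 ∧ t (Fin.last n) = 1 ∧ Monotone t ∧
      ∀ i : Fin n, AffOn γ (t i.castSucc) (t i.succ)

/-- `γ` is a simple piecewise linear curve (finitely many segments). -/
def IsPLCurve (γ : ℝ → Pt) : Prop := ∃ n, IsPLCurveN n γ

/-- `γ` restricted to `[0,1]` is a simple rectilinear (axis-parallel) curve consisting of
at most `n` horizontal or vertical straight segments. -/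
def IsRectCurveN (n : ℕ) (γ : ℝ → Pt) : Prop :=
  InjOn γ (Icc 0 1) ∧
    ∃ t : Fin (n + 1) → ℝ, t 0 = 0 ∧ t (Fin.last n) = 1 ∧ Monotone t ∧
      ∀ i : Fin n, AxisAffOn γ (t i.castSucc) (t i.succ)

/-- `γ` is a simple rectilinear (axis-parallel) piecewise linear curve. -/
def IsRectCurve (γ : ℝ → Pt) : Prop := ∃ n, IsRectCurveN n γ

/-- A `k`-bend axis-parallel curve: a simple curve that is a concatenation of at most
`k+1` horizontal or vertical straight segments (hence has at most `k` bends). -/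
def IsKBendCurve (k : ℕ) (γ : ℝ → Pt) : Prop := IsRectCurveN (k + 1) γ

/-- `R` is an intersection representation of `G` by curves:
two distinct vertices are adjacent iff their curves meet. -/
def Represents {V : Type*} (G : SimpleGraph V) (R : V → ℝ → Pt) : Prop :=
  ∀ u v : V, u ≠ v → ((Im (R u) ∩ Im (R v)).Nonempty ↔ G.Adj u v)

/-- The set of intersection points of a representation: points lying on (at least)
two distinct curves. -/
def InPts {V : Type*} (R : V → ℝ → Pt) : Set Pt :=
  {p | ∃ u v : V, u ≠ v ∧ p ∈ Im (R u) ∧ p ∈ Im (R v)}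

/-- The set `B` crosses (transversally, from one side to the other) the set `A` at `p`:
in every small ball around `p` there are points of `B` off `A` that cannot be joined by a
connected subset of the ball avoiding `A`. -/
def CrossesAt (A B : Set Pt) (p : Pt) : Prop :=
  ∃ ε₀ > (0:ℝ), ∀ ε : ℝ, 0 < ε → ε ≤ ε₀ →
    ∃ x y : Pt, x ∈ (B ∩ ball p ε) \ A ∧ y ∈ (B ∩ ball p ε) \ A ∧
      ∀ C : Set Pt, C ⊆ ball p ε \ A → IsConnected C → ¬(x ∈ C ∧ y ∈ C)

/-- A proper representation: finitely many intersection points (in particular no two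
curves overlap), every intersection point lies on exactly two curves which cross
(do not touch) there, and no endpoint of a curve lies on another curve. -/
def IsProperRep {V : Type*} (R : V → ℝ → Pt) : Prop :=
  (InPts R).Finite ∧
    (∀ p : Pt, ∀ u v w : V, u ≠ v → u ≠ w → v ≠ w →
      ¬(p ∈ Im (R u) ∧ p ∈ Im (R v) ∧ p ∈ Im (R w))) ∧
    (∀ u v : V, u ≠ v → R u 0 ∉ Im (R v) ∧ R u 1 ∉ Im (R v)) ∧
    (∀ u v : V, u ≠ v → ∀ p ∈ Im (R u) ∩ Im (R v),
      CrossesAt (Im (R u)) (Im (R v)) p ∧ CrossesAt (Im (R v)) (Im (R u)) p)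

/-- Membership in the class `B_k`-VPG. -/
def InBkVPG (k : ℕ) {V : Type*} (G : SimpleGraph V) : Prop :=
  ∃ R : V → ℝ → Pt, (∀ v, IsKBendCurve k (R v)) ∧ Represents G R

/-- Membership in the class SEG of intersection graphs of straight line segments. -/
def InSEG {V : Type*} (G : SimpleGraph V) : Prop :=
  ∃ S : V → Pt × Pt, (∀ v, (S v).1 ≠ (S v).2) ∧
    ∀ u v : V, u ≠ v →
      ((segment ℝ (S u).1 (S u).2 ∩ segment ℝ (S v).1 (S v).2).Nonempty ↔ G.Adj u v)

/-- Membership in the class 3-DIR: intersection graphs of straight line segments using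
at most three distinct directions (slopes). -/
def In3DIR {V : Type*} (G : SimpleGraph V) : Prop :=
  ∃ D : Fin 3 → Pt, ∃ S : V → Pt × Pt,
    (∀ v, (S v).1 ≠ (S v).2) ∧
    (∀ v, ∃ i : Fin 3, ∃ c : ℝ, (S v).2 - (S v).1 = c • D i) ∧
    ∀ u v : V, u ≠ v →
      ((segment ℝ (S u).1 (S u).2 ∩ segment ℝ (S v).1 (S v).2).Nonempty ↔ G.Adj u v)

/-- `L` is a (straight) line in the plane. -/
def IsLine (L : Set Pt) : Prop :=
  ∃ p d : Pt, d ≠ 0 ∧ L = {x : Pt | ∃ r : ℝ, x = (p.1 + r * d.1, p.2 + r * d.2)}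

/-- `z` is a bend point of the set `S` (trace of a curve): `S` is not locally straight
at `z`, i.e. no neighbourhood of `z` in `S` is contained in a line. -/
def IsBendPt (S : Set Pt) (z : Pt) : Prop :=
  z ∈ S ∧ ∀ ε > (0:ℝ), ¬ ∃ L : Set Pt, IsLine L ∧ S ∩ ball z ε ⊆ L

/-! ### Rectilinear curves as unions of boxes -/

/-- Appending a degenerate segment turns an `n`-segment curve into an `(n+1)`-segment one. -/
theorem IsRectCurveN.succ {n : ℕ} {γ : ℝ → Pt} (h : IsRectCurveN n γ) :
    IsRectCurveN (n + 1) γ := by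
  obtain ⟨hinj, t, h0, h1, hm, ha⟩ := h
  have ht1 : ∀ i, t i ≤ 1 := fun i => h1 ▸ hm (Fin.le_last i)
  refine ⟨hinj, Fin.snoc t 1, ?_, by simp, ?_, ?_⟩
  · have : (0 : Fin (n + 1 + 1)) = Fin.castSucc 0 := rfl
    rw [this, Fin.snoc_castSucc, h0]
  · intro i j hij
    induction j using Fin.lastCases with
    | last =>
      induction i using Fin.lastCases with
      | last => simp
      | cast i => simpa using ht1 i
    | cast j =>
      induction i using Fin.lastCases with
      | last => exact absurd hij (not_le.mpr (Fin.castSucc_lt_last j))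
      | cast i => simpa using hm (by simpa using hij)
  · intro i
    induction i using Fin.lastCases with
    | last =>
      -- the new parameter interval is `[1, 1]`
      refine ⟨γ 1, 0, by simp, fun x hx => ?_⟩
      rw [Fin.snoc_castSucc, h1, Fin.succ_last, Fin.snoc_last] at hx
      have : x = 1 := le_antisymm hx.2 hx.1
      simp [this]
    | cast i =>
      have := ha i
      rw [Fin.snoc_castSucc, Fin.succ_castSucc, Fin.snoc_castSucc]
      exact this

theorem IsRectCurveN.mono {n m : ℕ} (hnm : n ≤ m) {γ : ℝ → Pt} (h : IsRectCurveN n γ) :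
    IsRectCurveN m γ := by
  induction m, hnm using Nat.le_induction with
  | base => exact h
  | succ m _ ih => exact ih.succ

theorem exists_mem_Icc_of_chain {n : ℕ} (t : Fin (n + 1) → ℝ) {x : ℝ}
    (h0 : t 0 ≤ x) (h1 : x ≤ t (Fin.last n)) (hlt : t 0 < t (Fin.last n)) :
    ∃ i : Fin n, x ∈ Icc (t i.castSucc) (t i.succ) := by
  induction n with
  | zero => exact absurd hlt (lt_irrefl _)
  | succ n ih =>
    by_cases hx : t (Fin.last n).castSucc ≤ x
    · exact ⟨Fin.last n, hx, by simpa using h1⟩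
    · obtain ⟨i, hi⟩ := ih (fun i => t i.castSucc) (by simpa using h0) (le_of_not_ge hx)
        (lt_of_le_of_lt (by simpa using h0) (not_le.mp hx))
      exact ⟨i.castSucc, by simpa using hi⟩

theorem image_affine_Icc (a d : ℝ) {s t : ℝ} (hst : s ≤ t) :
    (fun x => a + x * d) '' Icc s t = uIcc (a + s * d) (a + t * d) := by
  have h : (fun x => a + x * d) = (fun x => a + x) ∘ (fun x => x * d) := rfl
  rw [h, image_comp, ← uIcc_of_le hst, image_mul_const_uIcc, image_const_add_uIcc]

theorem AxisAffOn.image {γ : ℝ → Pt} {s t : ℝ} (hst : s ≤ t) (h : AxisAffOn γ s t) :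
    γ '' Icc s t = uIcc (γ s) (γ t) ∧ ((γ t).1 = (γ s).1 ∨ (γ t).2 = (γ s).2) := by
  obtain ⟨a, d, hd, hγ⟩ := h
  rw [image_congr hγ, hγ s (left_mem_Icc.2 hst), hγ t (right_mem_Icc.2 hst)]
  refine ⟨?_, by rcases hd with hd | hd <;> simp [hd]⟩
  have h1 := image_affine_Icc a.1 d.1 hst
  have h2 := image_affine_Icc a.2 d.2 hst
  rw [← uIcc_prod_uIcc, ← h1, ← h2]
  have hs := left_mem_Icc.2 hst
  ext ⟨u, v⟩
  rcases hd with hd | hd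
  · simp only [hd, mem_image, mem_prod, Prod.mk.injEq]
    constructor
    · rintro ⟨x, hx, rfl, rfl⟩; exact ⟨⟨x, hx, rfl⟩, ⟨x, hx, rfl⟩⟩
    · rintro ⟨⟨y, hy, rfl⟩, ⟨x, hx, rfl⟩⟩; exact ⟨x, hx, by simp, rfl⟩
  · simp only [hd, mem_image, mem_prod, Prod.mk.injEq]
    constructor
    · rintro ⟨x, hx, rfl, rfl⟩; exact ⟨⟨x, hx, rfl⟩, ⟨x, hx, rfl⟩⟩
    · rintro ⟨⟨y, hy, rfl⟩, ⟨x, hx, rfl⟩⟩; exact ⟨y, hy, rfl, by simp⟩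

/-- The trace of a rectilinear curve is a union of degenerate boxes spanned by consecutive
vertices `p i`; the flag `σ i` records a coordinate that the `i`-th segment keeps fixed. -/
theorem IsRectCurveN.exists_vertices {n : ℕ} {γ : ℝ → Pt} (h : IsRectCurveN n γ) :
    ∃ (p : Fin (n + 1) → Pt) (σ : Fin n → Bool),
      Im γ = ⋃ i : Fin n, uIcc (p i.castSucc) (p i.succ) ∧
      ∀ i, if σ i then (p i.succ).1 = (p i.castSucc).1 else (p i.succ).2 = (p i.castSucc).2 := by
  obtain ⟨-, t, h0, h1, hm, ha⟩ := h
  have key := fun i : Fin n => (ha i).image (hm (Fin.castSucc_lt_succ (i := i)).le)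
  refine ⟨fun i => γ (t i), fun i => decide ((γ (t i.succ)).1 = (γ (t i.castSucc)).1), ?_, ?_⟩
  · simp only [← (key _).1, ← image_iUnion]
    refine congrArg (γ '' ·) (Subset.antisymm (fun x hx => ?_) (iUnion_subset fun i => ?_))
    · exact mem_iUnion.2 (exists_mem_Icc_of_chain t (h0 ▸ hx.1) (h1 ▸ hx.2)
        (by rw [h0, h1]; exact one_pos))
    · exact Icc_subset_Icc (h0 ▸ hm (Fin.zero_le _)) (h1 ▸ hm (Fin.le_last _))
  · intro i
    have := (key i).2
    by_cases hi : (γ (t i.succ)).1 = (γ (t i.castSucc)).1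
    · simp [hi]
    · simpa [hi] using this.resolve_left hi

/-! ### Counting neighbourhoods of rectilinear curves -/

/-- `r` and `r'` compare in the same way with every element of `S`. -/
def SameCell (S : Finset ℝ) (r r' : ℝ) : Prop :=
  ∀ s ∈ S, (s ≤ r ↔ s ≤ r') ∧ (r ≤ s ↔ r' ≤ s)

/-- A set of at most `N` reals cuts the line into at most `2 * N + 1` cells; the index of the
cell of `r` is `#{s < r} + #{s ≤ r}`. -/
theorem exists_cell (S : Finset ℝ) (N : ℕ) (hN : S.card ≤ N) :
    ∃ f : ℝ → Fin (2 * N + 1), ∀ r r', f r = f r' → SameCell S r r' := by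
  have hle : ∀ r, (S.filter (· < r)).card + (S.filter (· ≤ r)).card < 2 * N + 1 := fun r => by
    have h1 := S.card_filter_le (· < r)
    have h2 := S.card_filter_le (· ≤ r)
    omega
  refine ⟨fun r => ⟨_, hle r⟩, ?_⟩
  have main : ∀ r r' : ℝ, r ≤ r' →
      (S.filter (· < r)).card + (S.filter (· ≤ r)).card =
        (S.filter (· < r')).card + (S.filter (· ≤ r')).card → SameCell S r r' := by
    intro r r' hrr h
    have s1 : S.filter (· < r) ⊆ S.filter (· < r') :=
      Finset.monotone_filter_right _ fun s _ hs => lt_of_lt_of_le hs hrr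
    have s2 : S.filter (· ≤ r) ⊆ S.filter (· ≤ r') :=
      Finset.monotone_filter_right _ fun s _ hs => le_trans hs hrr
    have c1 := Finset.card_le_card s1
    have c2 := Finset.card_le_card s2
    have e1 := Finset.eq_of_subset_of_card_le s1 (by omega)
    have e2 := Finset.eq_of_subset_of_card_le s2 (by omega)
    intro s hs
    have m1 := Finset.ext_iff.1 e1 s
    have m2 := Finset.ext_iff.1 e2 s
    simp only [Finset.mem_filter, hs, true_and] at m1 m2
    exact ⟨m2, by rw [← not_lt, ← not_lt, m1]⟩
  intro r r' h
  have h' := congrArg Fin.val h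
  rcases le_total r r' with hr | hr
  · exact main r r' hr h'
  · intro s hs
    have := main r' r hr h'.symm s hs
    exact ⟨this.1.symm, this.2.symm⟩

theorem uIcc_inter_uIcc_nonempty_iff {a b c d : ℝ} :
    (uIcc a b ∩ uIcc c d).Nonempty ↔
      (a ≤ c ∨ a ≤ d ∨ b ≤ c ∨ b ≤ d) ∧ (c ≤ a ∨ c ≤ b ∨ d ≤ a ∨ d ≤ b) := by
  rw [uIcc, uIcc, Icc_inter_Icc, nonempty_Icc]
  simp only [sup_le_iff, le_inf_iff, inf_le_iff, le_sup_iff]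
  rcases le_total a b with h1 | h1 <;> rcases le_total c d with h2 | h2 <;> grind

theorem uIcc_pt_inter_nonempty_iff {a b c d : Pt} :
    (uIcc a b ∩ uIcc c d).Nonempty ↔
      (uIcc a.1 b.1 ∩ uIcc c.1 d.1).Nonempty ∧ (uIcc a.2 b.2 ∩ uIcc c.2 d.2).Nonempty := by
  have h : ∀ p q : Pt, uIcc p q = uIcc p.1 q.1 ×ˢ uIcc p.2 q.2 := fun p q => by
    rw [uIcc_prod_uIcc]
  rw [h, h, prod_inter_prod, prod_nonempty_iff]

theorem SameCell.inter_iff {S : Finset ℝ} {a b a' b' c d : ℝ} (ha : SameCell S a a')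
    (hb : SameCell S b b') (hc : c ∈ S) (hd : d ∈ S) :
    (uIcc a b ∩ uIcc c d).Nonempty ↔ (uIcc a' b' ∩ uIcc c d).Nonempty := by
  rw [uIcc_inter_uIcc_nonempty_iff, uIcc_inter_uIcc_nonempty_iff, (ha c hc).1, (ha c hc).2,
    (ha d hd).1, (ha d hd).2, (hb c hc).1, (hb c hc).2, (hb d hd).1, (hb d hd).2]

/-- Curves with `n` segments realize only `O(|B| ^ (n + 2))` neighbourhoods within a family of
`|B|` such curves: a curve is given by `n + 2` coordinates, the two of its first vertex and one
more per segment, and only their cells relative to the coordinates of the family matter. -/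
theorem card_le_of_separated (n : ℕ) {B C : Type} [Fintype B] [Fintype C]
    (β : B → ℝ → Pt) (δ : C → ℝ → Pt) (hβ : ∀ b, IsRectCurveN n (β b))
    (hδ : ∀ c, IsRectCurveN n (δ c))
    (hsep : ∀ c c', (∀ b, (Im (β b) ∩ Im (δ c)).Nonempty ↔ (Im (β b) ∩ Im (δ c')).Nonempty) →
      c = c') :
    Fintype.card C ≤ 2 ^ n * (2 * (Fintype.card B * ((n + 1) * 2)) + 1) ^ (n + 2) := by
  choose q τ hq hτ using fun b => (hβ b).exists_vertices
  choose p σ hp hσ using fun c => (hδ c).exists_vertices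
  let S : Finset ℝ := Finset.univ.image (fun x : B × (Fin (n + 1) × Bool) =>
    if x.2.2 then (q x.1 x.2.1).1 else (q x.1 x.2.1).2)
  have hS1 : ∀ b j, (q b j).1 ∈ S := fun b j =>
    Finset.mem_image.2 ⟨(b, j, true), Finset.mem_univ _, by simp⟩
  have hS2 : ∀ b j, (q b j).2 ∈ S := fun b j =>
    Finset.mem_image.2 ⟨(b, j, false), Finset.mem_univ _, by simp⟩
  have hScard : S.card ≤ Fintype.card B * ((n + 1) * 2) := by
    refine Finset.card_image_le.trans (le_of_eq ?_)
    simp [Finset.card_univ]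
  obtain ⟨f, hf⟩ := exists_cell S _ hScard
  let code : C → (Fin n → Bool) ×
      ((Fin (2 * (Fintype.card B * ((n + 1) * 2)) + 1) ×
        Fin (2 * (Fintype.card B * ((n + 1) * 2)) + 1)) ×
        (Fin n → Fin (2 * (Fintype.card B * ((n + 1) * 2)) + 1))) := fun c =>
    (σ c, (f (p c 0).1, f (p c 0).2),
      fun i => f (if σ c i then (p c i.succ).2 else (p c i.succ).1))
  have hinj : Function.Injective code := by
    intro c c' h
    simp only [code, Prod.mk.injEq] at h
    obtain ⟨h1, ⟨h2, h3⟩, h4⟩ := h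
    have hcell : ∀ i, SameCell S (p c i).1 (p c' i).1 ∧ SameCell S (p c i).2 (p c' i).2 := by
      intro i
      induction i using Fin.induction with
      | zero => exact ⟨hf _ _ h2, hf _ _ h3⟩
      | succ i ih =>
        have e := hf _ _ (congrFun h4 i)
        have e1 := hσ c i
        have e2 := hσ c' i
        rw [← h1] at e e2
        by_cases hs : σ c i = true
        · simp only [hs, if_true] at e e1 e2
          rw [e1, e2]; exact ⟨ih.1, e⟩
        · simp only [hs] at e e1 e2
          simp only [Bool.false_eq_true, if_false] at e e1 e2
          rw [e1, e2]; exact ⟨e, ih.2⟩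
    refine hsep c c' fun b => ?_
    have hmeet : ∀ c, (Im (β b) ∩ Im (δ c)).Nonempty ↔ ∃ (i j : Fin n),
        (uIcc (p c i.castSucc) (p c i.succ) ∩ uIcc (q b j.castSucc) (q b j.succ)).Nonempty := by
      intro c
      rw [hq, hp, inter_comm]
      simp only [iUnion_inter, inter_iUnion, nonempty_iUnion]
      exact exists_comm
    rw [hmeet, hmeet]
    refine exists_congr fun i => exists_congr fun j => ?_
    rw [uIcc_pt_inter_nonempty_iff, uIcc_pt_inter_nonempty_iff,
      (hcell _).1.inter_iff (hcell _).1 (hS1 _ _) (hS1 _ _),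
      (hcell _).2.inter_iff (hcell _).2 (hS2 _ _) (hS2 _ _)]
  refine (Fintype.card_le_of_injective code hinj).trans (le_of_eq ?_)
  simp only [Fintype.card_prod, Fintype.card_fun, Fintype.card_fin, Fintype.card_bool]
  ring

/-! ### Monotone staircases -/

/-- Arc-length parametrization of a monotone staircase: at parameter `l` the sum of the two
coordinates is `l`. -/
theorem exists_arclength (p : ℕ → Pt) (hle : ∀ i, p i ≤ p (i + 1))
    (hax : ∀ i, (p (i + 1)).1 = (p i).1 ∨ (p (i + 1)).2 = (p i).2) (n : ℕ) :
    ∃ γ : ℝ → Pt, ∀ i < n, ∀ l ∈ Icc ((p i).1 + (p i).2) ((p (i + 1)).1 + (p (i + 1)).2),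
      γ l = if (p (i + 1)).1 = (p i).1 then ((p i).1, l - (p i).1)
        else (l - (p i).2, (p i).2) := by
  have hmono : Monotone fun i => (p i).1 + (p i).2 :=
    monotone_nat_of_le_succ fun i => add_le_add (hle i).1 (hle i).2
  induction n with
  | zero => exact ⟨fun _ => 0, fun i hi => absurd hi (Nat.not_lt_zero i)⟩
  | succ n ih =>
    obtain ⟨γ, hγ⟩ := ih
    refine ⟨fun l => if l < (p n).1 + (p n).2 then γ l else
      if (p (n + 1)).1 = (p n).1 then ((p n).1, l - (p n).1) else (l - (p n).2, (p n).2), ?_⟩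
    intro i hi l hl
    rcases Nat.lt_succ_iff_lt_or_eq.1 hi with hi | rfl
    · by_cases hln : l < (p n).1 + (p n).2
      · simp only [hln, if_true]; exact hγ i hi l hl
      · -- then `l` is the parameter of the common vertex `p (i + 1) = p n`
        have h1 : (p (i + 1)).1 + (p (i + 1)).2 ≤ (p n).1 + (p n).2 := hmono hi
        have h2 : (p (i + 1)).1 + (p (i + 1)).2 = (p n).1 + (p n).2 :=
          le_antisymm h1 ((not_lt.1 hln).trans hl.2)
        have hl' : l = (p n).1 + (p n).2 := le_antisymm (hl.2.trans h1) (not_lt.1 hln)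
        have hpm : p (i + 1) ≤ p n := monotone_nat_of_le_succ hle hi
        have e1 : (p (i + 1)).1 = (p n).1 := by linarith [hpm.1, hpm.2]
        have e2 : (p (i + 1)).2 = (p n).2 := by linarith [hpm.1, hpm.2]
        have := hax i
        simp only [hln, if_false]
        rw [e1, e2] at this
        rw [e1, hl']
        split_ifs <;> ext <;> simp_all
    · simp only [not_lt.2 hl.1, if_false]

theorem exists_rectCurve_of_monotone (p : ℕ → Pt) (hle : ∀ i, p i ≤ p (i + 1))
    (hax : ∀ i, (p (i + 1)).1 = (p i).1 ∨ (p (i + 1)).2 = (p i).2) (n : ℕ)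
    (hlt : (p 0).1 + (p 0).2 < (p n).1 + (p n).2) :
    ∃ γ : ℝ → Pt, IsRectCurveN n γ ∧ Im γ = ⋃ i : Fin n, Icc (p i) (p (i + 1)) := by
  obtain ⟨γ, hγ⟩ := exists_arclength p hle hax n
  have hmono : Monotone fun i => (p i).1 + (p i).2 :=
    monotone_nat_of_le_succ fun i => add_le_add (hle i).1 (hle i).2
  set s : ℕ → ℝ := fun i => (p i).1 + (p i).2 with hs
  set T := s n - s 0 with hT
  have hTpos : 0 < T := sub_pos.2 hlt
  let t : Fin (n + 1) → ℝ := fun i => (s i - s 0) / T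
  have ht0 : t 0 = 0 := by simp [t]
  have ht1 : t (Fin.last n) = 1 := by simp only [t, Fin.val_last]; exact div_self hTpos.ne'
  have htm : Monotone t := fun i j hij =>
    div_le_div_of_nonneg_right (sub_le_sub_right (hmono hij) _) hTpos.le
  have hmem : ∀ (i : Fin n) x, x ∈ Icc (t i.castSucc) (t i.succ) →
      s 0 + x * T ∈ Icc (s i) (s (i + 1)) := by
    intro i x hx
    have h1 := (div_le_iff₀ hTpos).1 hx.1
    have h2 := (le_div_iff₀ hTpos).1 hx.2
    simp only [Fin.val_castSucc, Fin.val_succ] at h1 h2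
    constructor <;> linarith
  have hend : ∀ i : Fin (n + 1), s 0 + t i * T = s i := by
    intro i; simp only [t]; field_simp; ring
  have hcov : ∀ x ∈ Icc (0 : ℝ) 1, ∃ i : Fin n, x ∈ Icc (t i.castSucc) (t i.succ) :=
    fun x hx => exists_mem_Icc_of_chain t (ht0 ▸ hx.1) (ht1 ▸ hx.2)
      (by rw [ht0, ht1]; exact one_pos)
  have hsum : ∀ x ∈ Icc (0 : ℝ) 1, (γ (s 0 + x * T)).1 + (γ (s 0 + x * T)).2 = s 0 + x * T := by
    intro x hx
    obtain ⟨i, hi⟩ := hcov x hx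
    rw [hγ i i.2 _ (hmem i x hi)]
    split_ifs <;> simp
  have haff : ∀ i : Fin n, AxisAffOn (fun x => γ (s 0 + x * T)) (t i.castSucc) (t i.succ) := by
    intro i
    by_cases h : (p (i + 1)).1 = (p i).1
    · refine ⟨((p i).1, s 0 - (p i).1), (0, T), Or.inl rfl, fun x hx => ?_⟩
      simp only [hγ i i.2 _ (hmem i x hx), if_pos h]
      ext <;> simp; ring
    · refine ⟨(s 0 - (p i).2, (p i).2), (T, 0), Or.inr rfl, fun x hx => ?_⟩
      simp only [hγ i i.2 _ (hmem i x hx), if_neg h]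
      ext <;> simp; ring
  refine ⟨fun x => γ (s 0 + x * T), ⟨?_, t, ht0, ht1, htm, haff⟩, ?_⟩
  · intro x hx y hy hxy
    have h1 := hsum x hx
    have h2 := hsum y hy
    simp only at hxy
    rw [hxy, h2] at h1
    have : x * T = y * T := by linarith
    exact mul_right_cancel₀ hTpos.ne' this
  · have himg : ∀ i : Fin n, (fun x => γ (s 0 + x * T)) '' Icc (t i.castSucc) (t i.succ) =
        Icc (p i) (p (i + 1)) := by
      intro i
      have hti : t i.castSucc ≤ t i.succ := htm (Fin.castSucc_lt_succ (i := i)).le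
      have hsi : s i ≤ s (i + 1) := hmono (Nat.le_succ _)
      rw [((haff i).image hti).1]
      simp only [hend, Fin.val_castSucc, Fin.val_succ]
      rw [hγ i i.2 _ (left_mem_Icc.2 hsi), hγ i i.2 _ (right_mem_Icc.2 hsi),
        ← uIcc_of_le (hle i)]
      have hcase := hax i
      congr 1
      · split_ifs <;> ext <;> simp
      · split_ifs with h
        · ext <;> simp [h]
        · have h' := hcase.resolve_left h
          ext <;> simp [h']
    simp only [← himg, ← image_iUnion]
    refine congrArg (_ '' ·) (Subset.antisymm (fun x hx => mem_iUnion.2 (hcov x hx))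
      (iUnion_subset fun i => ?_))
    exact Icc_subset_Icc (ht0 ▸ htm (Fin.zero_le _)) (ht1 ▸ htm (Fin.le_last _))

/-! ### Staircases and their detectors -/

/-- The point with coordinates `a, b`, in this order for even `i` and swapped for odd `i`. -/
def altPt (i : ℕ) (a b : ℕ) : Pt := if Even i then ((a : ℝ), (b : ℝ)) else ((b : ℝ), (a : ℝ))

theorem altPt_succ (i a b : ℕ) : altPt (i + 1) a b = altPt i b a := by
  by_cases h : Even i <;> simp [altPt, h, Nat.even_add_one]

theorem altPt_le (i : ℕ) {a b c d : ℕ} (h1 : a ≤ c) (h2 : b ≤ d) :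
    altPt i a b ≤ altPt i c d := by
  by_cases h : Even i <;> simp [altPt, h, h1, h2]

/-- The `i`-th coordinate of the staircase with parameters `c`; it lies in the `i`-th block
`[i * L, (i + 1) * L)`. -/
def stairCoord (k L : ℕ) (c : Fin (k + 4) → Fin L) (i : ℕ) : ℕ :=
  i * L + if h : i < k + 4 then (c ⟨i, h⟩ : ℕ) else 0

theorem stairCoord_bounds (k : ℕ) {L : ℕ} (hL : 0 < L) (c : Fin (k + 4) → Fin L) (i : ℕ) :
    i * L ≤ stairCoord k L c i ∧ stairCoord k L c i < (i + 1) * L := by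
  rw [add_one_mul, stairCoord]
  refine ⟨Nat.le_add_right _ _, Nat.add_lt_add_left ?_ _⟩
  split_ifs
  · exact (c _).2
  · exact hL

theorem stairCoord_fin (k : ℕ) {L : ℕ} (c : Fin (k + 4) → Fin L) (j : Fin (k + 4)) :
    stairCoord k L c j = j * L + c j := by
  simp [stairCoord]

theorem stairCoord_lt (k : ℕ) {L : ℕ} (hL : 0 < L) (c : Fin (k + 4) → Fin L) (i : ℕ) :
    stairCoord k L c i < stairCoord k L c (i + 1) :=
  (stairCoord_bounds k hL c i).2.trans_le (stairCoord_bounds k hL c (i + 1)).1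

/-- The `i`-th segment of the staircase: it moves from the `i`-th to the `(i+2)`-nd coordinate
while keeping the `(i+1)`-st one. -/
def stairSeg (k L : ℕ) (c : Fin (k + 4) → Fin L) (i : ℕ) : Set Pt :=
  Icc (altPt i (stairCoord k L c i) (stairCoord k L c (i + 1)))
    (altPt i (stairCoord k L c (i + 2)) (stairCoord k L c (i + 1)))

/-- The block used by the detectors of the `j`-th coordinate: `j + 1`, or `j - 1` for the last
two coordinates. -/
def detBlock (k j : ℕ) : ℕ := if j ≤ k + 1 then j + 1 else j - 1

/-- The detector for the `j`-th coordinate and value `v`: a segment on the line where the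
coordinate of parity `j` equals `j * L + v`, spanning the lattice points of the block
`detBlock k j` in the other coordinate. -/
def detSeg (k L j v : ℕ) : Set Pt :=
  Icc (altPt j (j * L + v) (detBlock k j * L))
    (altPt j (j * L + v) (detBlock k j * L + (L - 1)))

theorem exists_staircase (k : ℕ) {L : ℕ} (hL : 0 < L) (c : Fin (k + 4) → Fin L) :
    ∃ γ, IsKBendCurve (k + 1) γ ∧ Im γ = ⋃ i : Fin (k + 2), stairSeg k L c i := by
  have hmono : StrictMono (stairCoord k L c) := strictMono_nat_of_lt_succ (stairCoord_lt k hL c)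
  have hlt : ∀ a b i, (altPt i a b).1 + (altPt i a b).2 = a + b := fun a b i => by
    by_cases h : Even i <;> simp [altPt, h, add_comm]
  obtain ⟨γ, h1, h2⟩ := exists_rectCurve_of_monotone
    (fun i => altPt i (stairCoord k L c i) (stairCoord k L c (i + 1)))
    (fun i => by
      rw [altPt_succ]
      exact altPt_le i (hmono.monotone (by omega)) le_rfl)
    (fun i => by
      rw [altPt_succ]
      by_cases h : Even i <;> simp [altPt, h]) (k + 2)
    (by
      rw [hlt, hlt]
      have a1 : stairCoord k L c 0 < stairCoord k L c (k + 2) := hmono (by omega)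
      have a2 : stairCoord k L c (0 + 1) < stairCoord k L c (k + 2 + 1) := hmono (by omega)
      exact_mod_cast Nat.add_lt_add a1 a2)
  refine ⟨γ, h1, h2.trans (iUnion_congr fun i => ?_)⟩
  rw [altPt_succ]
  rfl

theorem exists_detector (k : ℕ) {L : ℕ} (hL : 2 ≤ L) (j : Fin (k + 4)) (v : Fin L) :
    ∃ γ, IsKBendCurve (k + 1) γ ∧ Im γ = detSeg k L j v := by
  have hle : altPt j (j * L + v) (detBlock k j * L) ≤
      altPt j (j * L + v) (detBlock k j * L + (L - 1)) := altPt_le _ le_rfl (by omega)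
  obtain ⟨γ, h1, h2⟩ := exists_rectCurve_of_monotone
    (fun i => if i = 0 then altPt j (j * L + v) (detBlock k j * L) else
      altPt j (j * L + v) (detBlock k j * L + (L - 1)))
    (fun i => by by_cases h : i = 0 <;> simp [h, hle])
    (fun i => by
      by_cases h : i = 0 <;> by_cases h' : Even (j : ℕ) <;> simp [h, h', altPt]) 1
    (by
      have : (1 : ℝ) < L := by exact_mod_cast hL
      by_cases h' : Even (j : ℕ) <;> simp [h', altPt] <;> omega)
  refine ⟨γ, h1.mono (by omega), ?_⟩
  rw [h2]
  simp [detSeg, iUnion_const]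

theorem block_unique {L i j a : ℕ} (h1 : i * L ≤ a) (h2 : a < (i + 1) * L)
    (h3 : j * L ≤ a) (h4 : a < (j + 1) * L) : i = j := by
  have e1 := Nat.lt_of_mul_lt_mul_right (h1.trans_lt h4)
  have e2 := Nat.lt_of_mul_lt_mul_right (h3.trans_lt h2)
  omega

/-- A detector meets the `i`-th segment either transversally, or along a common line. -/
theorem detSeg_inter_stairSeg {k L : ℕ} {c : Fin (k + 4) → Fin L} {i j v : ℕ}
    (h : (detSeg k L j v ∩ stairSeg k L c i).Nonempty) :
    ((stairCoord k L c i ≤ j * L + v ∧ j * L + v ≤ stairCoord k L c (i + 2)) ∧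
      (detBlock k j * L ≤ stairCoord k L c (i + 1) ∧
        stairCoord k L c (i + 1) ≤ detBlock k j * L + (L - 1))) ∨
    j * L + v = stairCoord k L c (i + 1) := by
  obtain ⟨⟨x, y⟩, ⟨h1, h2⟩, h3, h4⟩ := h
  by_cases hi : Even i <;> by_cases hj : Even j <;>
    simp only [altPt, hi, hj, if_true, if_false, Prod.mk_le_mk] at h1 h2 h3 h4
  · left
    exact ⟨⟨by exact_mod_cast h3.1.trans h2.1, by exact_mod_cast h1.1.trans h4.1⟩,
      by exact_mod_cast h1.2.trans h4.2, by exact_mod_cast h3.2.trans h2.2⟩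
  · right
    exact le_antisymm (by exact_mod_cast h1.2.trans h4.2) (by exact_mod_cast h3.2.trans h2.2)
  · right
    exact le_antisymm (by exact_mod_cast h1.1.trans h4.1) (by exact_mod_cast h3.1.trans h2.1)
  · left
    exact ⟨⟨by exact_mod_cast h3.2.trans h2.2, by exact_mod_cast h1.2.trans h4.2⟩,
      by exact_mod_cast h1.1.trans h4.1, by exact_mod_cast h3.1.trans h2.1⟩

/-- A detector with `j ≤ k + 1` meets the staircase exactly when `c j ≤ v`, one with `j ≥ k + 2`
exactly when `v ≤ c j`. -/
theorem detector_meets_staircase (k : ℕ) {L : ℕ} (hL : 0 < L) (c : Fin (k + 4) → Fin L)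
    (j : Fin (k + 4)) (v : Fin L) :
    (detSeg k L j v ∩ ⋃ i : Fin (k + 2), stairSeg k L c i).Nonempty ↔
      if (j : ℕ) ≤ k + 1 then c j ≤ v else v ≤ c j := by
  have hz := stairCoord_bounds k hL c
  have hzj := stairCoord_fin k c j
  have hv := v.2
  have hj := j.2
  have hjL : (j : ℕ) * L + v < (j + 1) * L := by rw [add_one_mul]; omega
  constructor
  · intro h
    simp only [inter_iUnion, nonempty_iUnion] at h
    obtain ⟨i, hi⟩ := h
    rcases detSeg_inter_stairSeg hi with ⟨⟨a1, a2⟩, a3, a4⟩ | a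
    · have hb : (i : ℕ) + 1 = detBlock k j :=
        block_unique (hz _).1 (hz _).2 a3 (by rw [add_one_mul]; omega)
      unfold detBlock at hb
      split_ifs at hb ⊢
      · have : (i : ℕ) = j := by omega
        rw [this] at a1
        rw [Fin.le_def]; omega
      · have : (i : ℕ) + 2 = j := by omega
        rw [this] at a2
        rw [Fin.le_def]; omega
    · have hb : (i : ℕ) + 1 = j :=
        block_unique (hz _).1 (hz _).2 (a ▸ Nat.le_add_right _ _) (a ▸ hjL)
      rw [hb] at a
      have : c j = v := Fin.ext (by omega)
      simp [this]
  · -- the meeting point lies on the segment that keeps the coordinate of block `detBlock k j`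
    intro h
    simp only [inter_iUnion, nonempty_iUnion]
    obtain ⟨i, hib, hi⟩ : ∃ i : Fin (k + 2), (i : ℕ) + 1 = detBlock k j ∧
        (stairCoord k L c i ≤ j * L + v ∧ j * L + v ≤ stairCoord k L c (i + 2)) ∧
        ∀ a b, altPt i a b = altPt j a b := by
      by_cases hjk : (j : ℕ) ≤ k + 1
      · rw [if_pos hjk, Fin.le_def] at h
        refine ⟨⟨j, by omega⟩, by simp [detBlock, hjk], ⟨by simp only; omega, ?_⟩, fun _ _ => rfl⟩
        have e1 : (j + 1 : ℕ) * L ≤ (j + 2) * L := Nat.mul_le_mul_right _ (by omega)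
        have e2 := (hz (j + 2)).1
        simp only; omega
      · rw [if_neg hjk, Fin.le_def] at h
        obtain ⟨i, hi⟩ : ∃ i, (j : ℕ) = i + 2 := ⟨j - 2, by omega⟩
        refine ⟨⟨i, by omega⟩, by simp only [detBlock, if_neg hjk]; omega, ⟨?_, ?_⟩,
          fun a b => by rw [hi, altPt_succ, altPt_succ]⟩
        · have e1 : (i + 1 : ℕ) * L ≤ j * L := Nat.mul_le_mul_right _ (by omega)
          have e2 := (hz i).2
          simp only; omega
        · simp only [← hi]; omega
    have e1 := (hz (i + 1)).1
    have e2 := (hz (i + 1)).2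
    rw [hib] at e1 e2
    rw [add_one_mul] at e2
    refine ⟨i, altPt j (j * L + v) (stairCoord k L c (i + 1)), ⟨?_, ?_⟩, ?_, ?_⟩
    · exact altPt_le _ le_rfl (by rw [hib]; exact e1)
    · exact altPt_le _ le_rfl (by rw [hib]; omega)
    · rw [hi.2]; exact altPt_le _ hi.1.1 le_rfl
    · rw [hi.2]; exact altPt_le _ hi.1.2 le_rfl

theorem exists_large (k : ℕ) : ∃ L : ℕ, 2 ≤ L ∧
    2 ^ (k + 1) * (2 * ((k + 4) * L * ((k + 1 + 1) * 2)) + 1) ^ (k + 1 + 2) < L ^ (k + 4) := by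
  set A := 2 * ((k + 4) * ((k + 1 + 1) * 2)) + 1 with hA
  set K := 2 ^ (k + 1) * A ^ (k + 3) with hK
  refine ⟨K + 2, by omega, ?_⟩
  have h : 2 * ((k + 4) * (K + 2) * ((k + 1 + 1) * 2)) + 1 ≤ A * (K + 2) := by
    rw [hA]; ring_nf; omega
  calc _ ≤ 2 ^ (k + 1) * (A * (K + 2)) ^ (k + 3) :=
        Nat.mul_le_mul_left _ (Nat.pow_le_pow_left h _)
    _ = K * (K + 2) ^ (k + 3) := by rw [mul_pow, ← mul_assoc]
    _ < (K + 2) * (K + 2) ^ (k + 3) := Nat.mul_lt_mul_of_pos_right (by omega) (by positivity)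
    _ = (K + 2) ^ (k + 4) := by ring

/-- For every `k ≥ 0`, the class `B_k`-VPG is a proper subclass of
`B_{k+1}`-VPG: every graph with a `B_k`-VPG representation has a `B_{k+1}`-VPG
representation, and some graph has a `B_{k+1}`-VPG representation but no `B_k`-VPG
representation. -/
theorem Bk_VPG_strict_subclass_of_Bk1_VPG (k : ℕ) :
    (∀ (V : Type) (G : SimpleGraph V), InBkVPG k G → InBkVPG (k + 1) G) ∧
    ∃ (n : ℕ) (G : SimpleGraph (Fin n)), InBkVPG (k + 1) G ∧ ¬ InBkVPG k G := by
  refine ⟨fun V G ⟨R, hR, hG⟩ => ⟨R, fun v => (hR v).succ, hG⟩, ?_⟩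
  obtain ⟨L, hL2, hL⟩ := exists_large k
  have hL0 : 0 < L := by omega
  obtain ⟨n, e⟩ : ∃ n, Nonempty
      (((Fin (k + 4) × Fin L) ⊕ (Fin (k + 4) → Fin L)) ≃ Fin n) :=
    ⟨_, ⟨Fintype.equivFin _⟩⟩
  obtain ⟨e⟩ := e
  choose D hD hDim using fun q : Fin (k + 4) × Fin L => exists_detector k hL2 q.1 q.2
  choose S hS hSim using fun c : Fin (k + 4) → Fin L => exists_staircase k hL0 c
  let R : Fin n → ℝ → Pt := fun v => Sum.elim D S (e.symm v)
  let G : SimpleGraph (Fin n) :=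
    { Adj := fun u v => u ≠ v ∧ (Im (R u) ∩ Im (R v)).Nonempty
      symm := ⟨fun u v h => ⟨h.1.symm, by rw [inter_comm]; exact h.2⟩⟩
      loopless := ⟨fun u h => h.1 rfl⟩ }
  have hRG : Represents G R := fun u v huv => ⟨fun h => ⟨huv, h⟩, fun h => h.2⟩
  refine ⟨n, G, ⟨R, fun v => ?_, hRG⟩, ?_⟩
  · rcases h : e.symm v with q | c
    · simpa only [R, h, Sum.elim_inl] using hD q
    · simpa only [R, h, Sum.elim_inr] using hS c
  · rintro ⟨R', hR', hG'⟩
    have key := card_le_of_separated (k + 1)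
      (fun q : Fin (k + 4) × Fin L => R' (e (Sum.inl q)))
      (fun c : Fin (k + 4) → Fin L => R' (e (Sum.inr c)))
      (fun q => hR' _) (fun c => hR' _) (fun c c' hcc => ?_)
    · simp only [Fintype.card_prod, Fintype.card_fun, Fintype.card_fin] at key
      exact absurd key (not_le.mpr hL)
    · -- Both representations induce the same incidences between detectors and staircases.
      have hiff : ∀ q c, (Im (R' (e (Sum.inl q))) ∩ Im (R' (e (Sum.inr c)))).Nonempty ↔
          (Im (D q) ∩ Im (S c)).Nonempty := fun q c => by
        have hne : e (Sum.inl q) ≠ e (Sum.inr c) := by simp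
        rw [hG' _ _ hne, ← hRG _ _ hne]
        simp [R]
      simp only [hiff] at hcc
      refine funext fun j => ?_
      have h1 : ∀ c v, (Im (D (j, v)) ∩ Im (S c)).Nonempty ↔
          (if (j : ℕ) ≤ k + 1 then c j ≤ v else v ≤ c j) := fun c v => by
        rw [hDim, hSim]; exact detector_meets_staircase k hL0 c j v
      have h2 : ∀ v, (if (j : ℕ) ≤ k + 1 then c j ≤ v else v ≤ c j) ↔
          (if (j : ℕ) ≤ k + 1 then c' j ≤ v else v ≤ c' j) := fun v => by
        rw [← h1, ← h1]; exact hcc (j, v)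
      have h3 := h2 (c j)
      have h4 := h2 (c' j)
      split_ifs at h3 h4
      · exact le_antisymm (h4.2 le_rfl) (h3.1 le_rfl)
      · exact le_antisymm (h3.1 le_rfl) (h4.2 le_rfl)
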